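/- For all x, y ∈ ℝ³ with x ≠ y and all indices i, j, k ∈ {1,2,3}, the partial derivative of the Kupradze matrix with respect to the second variable satisfies ∂/∂y_k [Γ^ω(x,y)_{ij}] = −(1/(4π)) Σ_{l=0}^∞ (i^l/(l!(l+2))) ((l−1)/ω²) [ ((l+1)κ_s^{l+2} + κ_p^{l+2}) |x−y|^{l−3} (x_k−y_k) δ_{ij} − (κ_s^{l+2} − κ_p^{l+2}) ( (l−3) |x−y|^{l−5} (x_i−y_i)(x_j−y_j)(x_k−y_k) + |x−y|^{l−3} ( δ_{ik}(x_j−y_j) + (x_i−y_i)δ_{jk} ) ) ], the series converging absolutely. -/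

import Mathlib

noncomputable section
open Real

abbrev E3 := EuclideanSpace ℝ (Fin 3)

/-- Free-space fundamental solution of the Helmholtz equation,
`Φ_κ(x,y) = exp(iκ|x−y|)/(4π|x−y|)`. -/
def Phi (κ : ℝ) (x y : E3) : ℂ :=
  Complex.exp (Complex.I * κ * ‖x - y‖) / (4 * Real.pi * ‖x - y‖)

/-- Transversal wavenumber `κ_s = ω/√μ`. -/
def kappaS (mu om : ℝ) : ℝ := om / Real.sqrt mu

/-- Longitudinal wavenumber `κ_p = ω/√(λ+2μ)`. -/
def kappaP (lam mu om : ℝ) : ℝ := om / Real.sqrt (lam + 2 * mu)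

/-- The Kupradze matrix of the fundamental solution of the Navier equation. -/
def Gamma (lam mu om : ℝ) (x y : E3) (i j : Fin 3) : ℂ :=
  (1 / (mu : ℂ)) * Phi (kappaS mu om) x y * (if i = j then 1 else 0)
  + (1 / (om : ℂ) ^ 2) *
      fderiv ℝ
        (fun x' : E3 =>
          fderiv ℝ
            (fun x'' : E3 => Phi (kappaS mu om) x'' y - Phi (kappaP lam mu om) x'' y)
            x' (EuclideanSpace.single j 1))
        x (EuclideanSpace.single i 1)

/-- `l`-th term of the series (gradkupradzeten1) for `∂Γ^ω(x,y)_{ij}/∂y_k`. -/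
def gradGammaSeries (lam mu om : ℝ) (x y : E3) (i j k : Fin 3) (l : ℕ) : ℂ :=
  (1 / (4 * (Real.pi : ℂ))) * (Complex.I ^ l / ((l.factorial : ℂ) * ((l : ℂ) + 2)))
    * (((l : ℂ) - 1) / (om : ℂ) ^ 2)
    * ( (((l : ℂ) + 1) * ((kappaS mu om : ℝ) : ℂ) ^ (l + 2)
          + ((kappaP lam mu om : ℝ) : ℂ) ^ (l + 2))
        * ((‖x - y‖ ^ ((l : ℤ) - 3) : ℝ) : ℂ) * ((x k - y k : ℝ) : ℂ)
        * (if i = j then 1 else 0)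
      - (((kappaS mu om : ℝ) : ℂ) ^ (l + 2) - ((kappaP lam mu om : ℝ) : ℂ) ^ (l + 2))
        * ( ((l : ℂ) - 3) * ((‖x - y‖ ^ ((l : ℤ) - 5) : ℝ) : ℂ)
              * ((x i - y i : ℝ) : ℂ) * ((x j - y j : ℝ) : ℂ) * ((x k - y k : ℝ) : ℂ)
          + ((‖x - y‖ ^ ((l : ℤ) - 3) : ℝ) : ℂ)
              * ((if i = k then 1 else 0) * ((x j - y j : ℝ) : ℂ)
                  + ((x i - y i : ℝ) : ℂ) * (if j = k then 1 else 0)) ) )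

/-!
Write `z = x - y` and `r = ‖z‖`. The operator `r⁻¹ d/dr` maps the profile `e^{iκr} / (4πr)` to
functions of the form `F_n(iκr) / (4π r^{2n+1})`, where `F_0 = exp` and
`F_{n+1}(z) = z F_n'(z) - (2n+1) F_n(z)`. On the power series side the recursion multiplies the
coefficient of `z^m` by `m - (2n+1)`, so each `F_n` has an explicit everywhere convergent
expansion, while the third directional derivatives of a radial function are polynomial in `z` and
in the first three iterates of `r⁻¹ d/dr`. In the differences of the two waves the first two terms
of the expansions cancel, and shifting the summation index by two gives the series.
-/

open Complex Finset Filter Topology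
open scoped Nat RealInnerProductSpace

lemma fderiv_comp_const_sub {𝕜 E F : Type*} [NontriviallyNormedField 𝕜]
    [NormedAddCommGroup E] [NormedSpace 𝕜 E] [NormedAddCommGroup F] [NormedSpace 𝕜 F]
    (f : E → F) (a x : E) :
    fderiv 𝕜 (fun x ↦ f (a - x)) x = -fderiv 𝕜 f (a - x) := by
  simpa [sub_eq_add_neg, fderiv_comp_add_left] using
    fderiv_comp_smul (𝕜 := 𝕜) (f := fun x ↦ f (a + x)) (x := x) (-1)

lemma coe_inner_single_single {ι : Type*} [Fintype ι] [DecidableEq ι] (i j : ι) :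
    ((⟪EuclideanSpace.single i 1, (EuclideanSpace.single j 1 : EuclideanSpace ℝ ι)⟫ : ℝ) : ℂ)
      = if i = j then 1 else 0 := by
  rw [EuclideanSpace.inner_single_left, PiLp.single_apply]
  split_ifs <;> simp

section PowerSeries

lemma hasSum_natCast_mul_coeff_mul_pow {c : ℕ → ℂ} {F : ℂ → ℂ}
    (h : ∀ z, HasSum (fun m ↦ c m * z ^ m) (F z)) (z : ℂ) :
    HasSum (fun m : ℕ ↦ m * c m * z ^ m) (z * deriv F z) := by
  have hF : F = fun w ↦ ∑' m, c m * w ^ m := funext fun w ↦ (h w).tsum_eq.symm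
  have hbound (m : ℕ) (w : ℂ) (hw : w ∈ Metric.ball (0 : ℂ) (‖z‖ + 1)) :
      ‖c m * w ^ m‖ ≤ ‖c m * ((‖z‖ + 1 : ℝ) : ℂ) ^ m‖ := by
    have hw' : ‖w‖ ≤ ‖((‖z‖ + 1 : ℝ) : ℂ)‖ := by
      rw [Complex.norm_of_nonneg (by positivity)]
      exact (mem_ball_zero_iff.1 hw).le
    simp only [norm_mul, norm_pow]
    gcongr
  have hderiv := (hasSum_deriv_of_summable_norm (h _).summable.norm
    (fun m ↦ by fun_prop) Metric.isOpen_ball hbound (z := z) (by simp)).mul_left z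
  rw [← hF] at hderiv
  refine hderiv.congr_fun fun m ↦ ?_
  have hmonomial : deriv (fun w ↦ c m * w ^ m) z = c m * (m * z ^ (m - 1)) := by simp
  rw [hmonomial]
  rcases m with _ | m
  · simp
  · rw [Nat.add_sub_cancel]
    ring

/-- A polynomial of degree `n` times `exp`: up to a constant factor, `hankelNumerator n (i r)` is
`r ^ (n + 1)` times the spherical Hankel function of order `n` at `r`. The recursion is the one
that makes `r⁻¹ d/dr` map `hankelNumerator n (c r) / r ^ (2 n + 1)` to its successor. -/
def hankelNumerator : ℕ → ℂ → ℂ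
  | 0, z => exp z
  | n + 1, z => z * deriv (hankelNumerator n) z - (2 * n + 1) * hankelNumerator n z

lemma differentiable_hankelNumerator (n : ℕ) : Differentiable ℂ (hankelNumerator n) := by
  induction n with
  | zero => exact differentiable_exp
  | succ n ih =>
    exact (differentiable_id.mul ih.deriv).sub (ih.const_mul _)

lemma hasSum_hankelNumerator (n : ℕ) (z : ℂ) :
    HasSum (fun m : ℕ ↦ (∏ k ∈ range n, ((m : ℂ) - (2 * k + 1))) / m ! * z ^ m)
      (hankelNumerator n z) := by
  induction n generalizing z with
  | zero => simpa [hankelNumerator, exp_eq_exp_ℂ, div_eq_inv_mul] using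
      NormedSpace.expSeries_div_hasSum_exp z
  | succ n ih =>
    refine ((hasSum_natCast_mul_coeff_mul_pow ih z).sub ((ih z).mul_left (2 * n + 1 : ℂ))).congr_fun
      fun m ↦ ?_
    rw [prod_range_succ]
    ring

end PowerSeries

section Radial

variable {E G : Type*} [NormedAddCommGroup E] [InnerProductSpace ℝ E]
  [NormedAddCommGroup G] [NormedSpace ℝ G]

lemma hasFDerivAt_norm_of_ne_zero {z : E} (hz : z ≠ 0) :
    HasFDerivAt (fun z : E ↦ ‖z‖) (‖z‖⁻¹ • innerSL ℝ z) z := by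
  have hsq := (hasStrictFDerivAt_norm_sq z).hasFDerivAt.sqrt (by simpa using hz)
  simp only [Real.sqrt_sq (norm_nonneg _)] at hsq
  refine hsq.congr_fderiv ?_
  ext v
  simp only [smul_apply, coe_innerSL_apply, nsmul_eq_mul, Nat.cast_ofNat, smul_eq_mul]
  field_simp

lemma hasFDerivAt_comp_norm {g : ℝ → G} {c : G} {z : E} (hz : z ≠ 0)
    (hg : HasDerivAt g (‖z‖ • c) ‖z‖) :
    HasFDerivAt (fun z : E ↦ g ‖z‖) ((innerSL ℝ z).smulRight c) z := by
  refine (hg.hasFDerivAt.comp z (hasFDerivAt_norm_of_ne_zero hz)).congr_fderiv ?_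
  ext v
  have hr : ‖z‖ ≠ 0 := norm_ne_zero_iff.2 hz
  calc (‖z‖⁻¹ * ⟪z, v⟫) • ‖z‖ • c = (‖z‖⁻¹ * ‖z‖ * ⟪z, v⟫) • c := by module
    _ = ⟪z, v⟫ • c := by rw [inv_mul_cancel₀ hr, one_mul]

/-- A family of functions of the radius in which `u (n + 1)` arises from `u n` by applying
`r⁻¹ d/dr`; the derivatives of `z ↦ u 0 ‖z‖` are then algebraic in `z` and the values `u n ‖z‖`. -/
def IsRadialDerivSeq (u : ℕ → ℝ → G) : Prop :=
  ∀ n r, 0 < r → HasDerivAt (u n) (r • u (n + 1) r) r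

namespace IsRadialDerivSeq

variable {u u' : ℕ → ℝ → G} {z : E}

lemma sub (hu : IsRadialDerivSeq u) (hu' : IsRadialDerivSeq u') :
    IsRadialDerivSeq (u - u') := fun n r hr ↦ by
  simpa [smul_sub] using! (hu n r hr).sub (hu' n r hr)

lemma hasFDerivAt (hu : IsRadialDerivSeq u) (n : ℕ) (hz : z ≠ 0) :
    HasFDerivAt (fun z : E ↦ u n ‖z‖) ((innerSL ℝ z).smulRight (u (n + 1) ‖z‖)) z :=
  hasFDerivAt_comp_norm hz (hu n _ (norm_pos_iff.2 hz))

lemma hasFDerivAt_fderiv_apply (hu : IsRadialDerivSeq u) (n : ℕ) (hz : z ≠ 0) (w : E) :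
    HasFDerivAt (fun z : E ↦ fderiv ℝ (fun z : E ↦ u n ‖z‖) z w)
      ((innerSL ℝ z).smulRight (⟪w, z⟫ • u (n + 2) ‖z‖)
        + (innerSL ℝ w).smulRight (u (n + 1) ‖z‖)) z := by
  have hfst : (fun z : E ↦ fderiv ℝ (fun z : E ↦ u n ‖z‖) z w) =ᶠ[𝓝 z]
      fun z ↦ innerSL ℝ w z • u (n + 1) ‖z‖ := by
    filter_upwards [isOpen_ne.mem_nhds hz] with z' hz'
    simp [(hu.hasFDerivAt n hz').fderiv, real_inner_comm z']
  refine HasFDerivAt.congr_of_eventuallyEq ?_ hfst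
  refine ((innerSL ℝ w).hasFDerivAt.fun_smul (hu.hasFDerivAt (n + 1) hz)).congr_fderiv ?_
  ext v
  simp only [coe_innerSL_apply, add_apply, smul_apply, ContinuousLinearMap.smulRight_apply]
  module

lemma hasFDerivAt_fderiv_fderiv_apply (hu : IsRadialDerivSeq u) (n : ℕ) (hz : z ≠ 0) (v w : E) :
    HasFDerivAt
      (fun z : E ↦ fderiv ℝ (fun z : E ↦ fderiv ℝ (fun z : E ↦ u n ‖z‖) z w) z v)
      ((innerSL ℝ z).smulRight
          ((⟪v, z⟫ * ⟪w, z⟫) • u (n + 3) ‖z‖ + ⟪v, w⟫ • u (n + 2) ‖z‖)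
        + (⟪w, z⟫ • innerSL ℝ v + ⟪v, z⟫ • innerSL ℝ w).smulRight (u (n + 2) ‖z‖)) z := by
  have hsnd : (fun z : E ↦ fderiv ℝ (fun z : E ↦ fderiv ℝ (fun z : E ↦ u n ‖z‖) z w) z v) =ᶠ[𝓝 z]
      fun z ↦ (innerSL ℝ v z * innerSL ℝ w z) • u (n + 2) ‖z‖ + ⟪v, w⟫ • u (n + 1) ‖z‖ := by
    filter_upwards [isOpen_ne.mem_nhds hz] with z' hz'
    simp [(hu.hasFDerivAt_fderiv_apply n hz' w).fderiv, real_inner_comm, smul_smul]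
  refine HasFDerivAt.congr_of_eventuallyEq ?_ hsnd
  refine ((((innerSL ℝ v).hasFDerivAt.fun_mul (innerSL ℝ w).hasFDerivAt).fun_smul
    (hu.hasFDerivAt (n + 2) hz)).fun_add
    ((hu.hasFDerivAt (n + 1) hz).fun_const_smul ⟪v, w⟫)).congr_fderiv ?_
  ext t
  simp only [coe_innerSL_apply, add_apply, smul_apply, ContinuousLinearMap.smulRight_apply,
    smul_eq_mul]
  module

end IsRadialDerivSeq
end Radial

section SphericalWave

/-- The iterate `(r⁻¹ d/dr)ⁿ` of the radial profile `exp (i κ r) / (4 π r)` of the fundamental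
solution of the Helmholtz equation. -/
def sphericalWave (κ : ℂ) (n : ℕ) (r : ℝ) : ℂ :=
  hankelNumerator n (I * κ * r) / (4 * π * r ^ (2 * n + 1))

lemma isRadialDerivSeq_sphericalWave (κ : ℂ) : IsRadialDerivSeq (sphericalWave κ) := by
  intro n r hr
  have hr' : (r : ℂ) ≠ 0 := mod_cast hr.ne'
  have hπ : (π : ℂ) ≠ 0 := mod_cast pi_ne_zero
  have hid : HasDerivAt (fun r : ℝ ↦ (r : ℂ)) 1 r := ofRealCLM.hasDerivAt
  have hnum := (differentiable_hankelNumerator n (I * κ * r)).hasDerivAt.comp r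
    (hid.const_mul (I * κ))
  refine (hnum.div ((hid.pow (2 * n + 1)).const_mul (4 * (π : ℂ))) (by simp [hr'])).congr_deriv ?_
  simp only [mul_one, Pi.pow_apply, Function.comp_apply, Nat.cast_add, Nat.cast_mul,
    Nat.cast_ofNat, Nat.cast_one, add_tsub_cancel_right, sphericalWave, hankelNumerator, real_smul]
  field_simp
  ring

/-- The `m`-th term of the expansion of `sphericalWave κ n r` obtained by applying
`(r⁻¹ d/dr)ⁿ` to each power `r ^ (m - 1)`. -/
def sphericalWaveTerm (κ : ℂ) (n : ℕ) (r : ℝ) (m : ℕ) : ℂ :=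
  (∏ k ∈ range n, ((m : ℂ) - (2 * k + 1))) * (I * κ) ^ m / m !
    * (r : ℂ) ^ ((m : ℤ) - (2 * n + 1)) / (4 * π)

lemma hasSum_sphericalWaveTerm (κ : ℂ) (n : ℕ) {r : ℝ} (hr : r ≠ 0) :
    HasSum (sphericalWaveTerm κ n r) (sphericalWave κ n r) := by
  refine ((hasSum_hankelNumerator n (I * κ * r)).div_const _).congr_fun fun m ↦ ?_
  have hr' : (r : ℂ) ≠ 0 := mod_cast hr
  have hpow : (r : ℂ) ^ ((m : ℤ) - (2 * n + 1)) = r ^ m / r ^ (2 * n + 1) := by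
    rw [zpow_sub₀ hr']
    norm_cast
  rw [sphericalWaveTerm, hpow]
  ring

lemma sphericalWaveTerm_succ_add_two (κ : ℂ) (n : ℕ) (r : ℝ) (m : ℕ) :
    sphericalWaveTerm κ (n + 1) r (m + 2) = -(κ ^ 2 / (m + 2) * sphericalWaveTerm κ n r m) := by
  have hprod : ∏ k ∈ range (n + 1), (((m + 2 : ℕ) : ℂ) - (2 * k + 1))
      = (m + 1) * ∏ k ∈ range n, ((m : ℂ) - (2 * k + 1)) := by
    rw [prod_range_succ', mul_comm]
    congr 1
    · push_cast; ring
    · refine prod_congr rfl fun k _ ↦ ?_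
      push_cast; ring
  have hexp : ((m + 2 : ℕ) : ℤ) - (2 * (n + 1 : ℕ) + 1) = m - (2 * n + 1) := by
    push_cast; ring
  have h₁ : (m : ℂ) + 1 ≠ 0 := mod_cast m.succ_ne_zero
  have h₂ : (m : ℂ) + 2 ≠ 0 := mod_cast (m + 1).succ_ne_zero
  have hfact : ((m + 2)! : ℂ) = (m + 2) * ((m + 1) * m !) := by
    simp only [Nat.factorial_succ]
    push_cast; ring
  rw [sphericalWaveTerm, sphericalWaveTerm, hprod, hexp, hfact, pow_add, mul_pow I κ 2, I_sq]
  field_simp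

/-- The terms `m = 0` of the two expansions agree and the terms `m = 1` vanish. Dropping them leaves
a series with the powers of `r` that occur in the expansion of `sphericalWave κ n r`. -/
lemma hasSum_sphericalWave_succ_sub (κ κ' : ℂ) (n : ℕ) {r : ℝ} (hr : r ≠ 0) :
    HasSum
      (fun m : ℕ ↦
        -((κ ^ 2 * sphericalWaveTerm κ n r m - κ' ^ 2 * sphericalWaveTerm κ' n r m) / (m + 2)))
      (sphericalWave κ (n + 1) r - sphericalWave κ' (n + 1) r) := by
  have hsub := (hasSum_sphericalWaveTerm κ (n + 1) hr).sub (hasSum_sphericalWaveTerm κ' (n + 1) hr)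
  have hinit : ∑ m ∈ range 2, (sphericalWaveTerm κ (n + 1) r m - sphericalWaveTerm κ' (n + 1) r m)
      = 0 := by
    simp [sum_range_succ, sphericalWaveTerm, prod_range_succ' _ n]
  have htail := (hasSum_nat_add_iff' 2).2 hsub
  rw [hinit, sub_zero] at htail
  refine htail.congr_fun fun m ↦ ?_
  rw [sphericalWaveTerm_succ_add_two, sphericalWaveTerm_succ_add_two]
  ring

end SphericalWave

section Kupradze

variable {E : Type*} [NormedAddCommGroup E] [InnerProductSpace ℝ E]

/-- The entry `(v, w)` of `ω² Γ^ω(x, y)` as a function of `z = x - y`, for arbitrary wavenumbers;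
the factor `κs ^ 2` is `ω² / μ`. -/
def kupradzeKernel (κs κp : ℂ) (v w z : E) : ℂ :=
  κs ^ 2 * sphericalWave κs 0 ‖z‖ * ⟪v, w⟫
    + fderiv ℝ (fun z : E ↦
        fderiv ℝ (fun z : E ↦ sphericalWave κs 0 ‖z‖ - sphericalWave κp 0 ‖z‖) z w) z v

lemma fderiv_kupradzeKernel_apply (κs κp : ℂ) (v w t : E) {z : E} (hz : z ≠ 0) :
    fderiv ℝ (kupradzeKernel κs κp v w) z t
      = κs ^ 2 * ⟪v, w⟫ * ⟪t, z⟫ * sphericalWave κs 1 ‖z‖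
        + ⟪v, z⟫ * ⟪w, z⟫ * ⟪t, z⟫ * (sphericalWave κs 3 ‖z‖ - sphericalWave κp 3 ‖z‖)
        + (⟪v, w⟫ * ⟪t, z⟫ + ⟪v, t⟫ * ⟪w, z⟫ + ⟪v, z⟫ * ⟪w, t⟫)
          * (sphericalWave κs 2 ‖z‖ - sphericalWave κp 2 ‖z‖) := by
  have hs := isRadialDerivSeq_sphericalWave κs
  have hshear := ((hs.hasFDerivAt 0 hz).const_mul (κs ^ 2)).mul_const (⟪v, w⟫ : ℂ)
  have hhess := (hs.sub (isRadialDerivSeq_sphericalWave κp)).hasFDerivAt_fderiv_fderiv_apply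
    0 hz v w
  have hker : HasFDerivAt (kupradzeKernel κs κp v w) _ z := hshear.add hhess
  rw [hker.fderiv]
  simp only [zero_add, Pi.sub_apply, real_smul, ofReal_mul, add_apply, smul_apply,
    ContinuousLinearMap.smulRight_apply, coe_innerSL_apply, real_inner_comm, smul_eq_mul, smul_add,
    ofReal_add]
  ring

/-- The `l`-th term of the series for the derivative of `kupradzeKernel κs κp v w` at `z` in
direction `t`. -/
def kupradzeGradTerm (κs κp : ℂ) (v w t z : E) (l : ℕ) : ℂ :=
  1 / (4 * π) * (I ^ l / (l ! * (l + 2))) * (l - 1)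
    * (((l + 1) * κs ^ (l + 2) + κp ^ (l + 2)) * (‖z‖ : ℂ) ^ ((l : ℤ) - 3) * ⟪t, z⟫ * ⟪v, w⟫
      - (κs ^ (l + 2) - κp ^ (l + 2))
        * ((l - 3) * (‖z‖ : ℂ) ^ ((l : ℤ) - 5) * ⟪v, z⟫ * ⟪w, z⟫ * ⟪t, z⟫
          + (‖z‖ : ℂ) ^ ((l : ℤ) - 3) * (⟪v, t⟫ * ⟪w, z⟫ + ⟪v, z⟫ * ⟪w, t⟫)))

lemma kupradzeGradTerm_eq (κs κp : ℂ) (v w t z : E) (l : ℕ) :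
    kupradzeGradTerm κs κp v w t z l
      = κs ^ 2 * ⟪v, w⟫ * ⟪t, z⟫ * sphericalWaveTerm κs 1 ‖z‖ l
        + ⟪v, z⟫ * ⟪w, z⟫ * ⟪t, z⟫ *
          -((κs ^ 2 * sphericalWaveTerm κs 2 ‖z‖ l - κp ^ 2 * sphericalWaveTerm κp 2 ‖z‖ l)
            / (l + 2))
        + (⟪v, w⟫ * ⟪t, z⟫ + ⟪v, t⟫ * ⟪w, z⟫ + ⟪v, z⟫ * ⟪w, t⟫) *
          -((κs ^ 2 * sphericalWaveTerm κs 1 ‖z‖ l - κp ^ 2 * sphericalWaveTerm κp 1 ‖z‖ l)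
            / (l + 2)) := by
  have hterm₁ (κ : ℂ) : sphericalWaveTerm κ 1 ‖z‖ l
      = (l - 1) * (I ^ l * κ ^ l) / l ! * (‖z‖ : ℂ) ^ ((l : ℤ) - 3) / (4 * π) := by
    simp [sphericalWaveTerm, mul_pow]
  have hterm₂ (κ : ℂ) : sphericalWaveTerm κ 2 ‖z‖ l
      = (l - 1) * (l - 3) * (I ^ l * κ ^ l) / l ! * (‖z‖ : ℂ) ^ ((l : ℤ) - 5) / (4 * π) := by
    norm_num [sphericalWaveTerm, prod_range_succ, mul_pow]
  have hl : (l : ℂ) + 2 ≠ 0 := mod_cast (l + 1).succ_ne_zero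
  rw [kupradzeGradTerm, hterm₁, hterm₁, hterm₂, hterm₂]
  field_simp
  ring

theorem grad_gamma_series_representation_general (κs κp : ℂ) (v w t : E) {z : E} (hz : z ≠ 0) :
    HasSum (kupradzeGradTerm κs κp v w t z) (fderiv ℝ (kupradzeKernel κs κp v w) z t) := by
  have hr : ‖z‖ ≠ 0 := norm_ne_zero_iff.2 hz
  have h₁ := hasSum_sphericalWaveTerm κs 1 hr
  have h₂ := hasSum_sphericalWave_succ_sub κs κp 1 hr
  have h₃ := hasSum_sphericalWave_succ_sub κs κp 2 hr
  rw [fderiv_kupradzeKernel_apply κs κp v w t hz]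
  exact (((h₁.mul_left _).add (h₃.mul_left _)).add (h₂.mul_left _)).congr_fun
    (kupradzeGradTerm_eq κs κp v w t z)

end Kupradze

section Elastic

lemma kappaS_sq {mu : ℝ} (hmu : 0 < mu) (om : ℝ) : kappaS mu om ^ 2 = om ^ 2 / mu := by
  rw [kappaS, div_pow, Real.sq_sqrt hmu.le]

lemma Phi_eq_sphericalWave (κ : ℝ) (x y : E3) : Phi κ x y = sphericalWave κ 0 ‖x - y‖ := by
  simp [Phi, sphericalWave, hankelNumerator]

lemma Gamma_eq_kupradzeKernel (lam : ℝ) {mu om : ℝ} (hmu : 0 < mu) (hom : om ≠ 0) (x y : E3)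
    (i j : Fin 3) :
    _root_.Gamma lam mu om x y i j = 1 / (om : ℂ) ^ 2 *
      kupradzeKernel (kappaS mu om) (kappaP lam mu om) (EuclideanSpace.single i 1)
        (EuclideanSpace.single j 1) (x - y) := by
  have hκ : (kappaS mu om : ℂ) ^ 2 = om ^ 2 / mu := mod_cast kappaS_sq hmu om
  have hom' : (om : ℂ) ≠ 0 := mod_cast hom
  have hfst (x : E3) := fderiv_comp_sub (𝕜 := ℝ) (x := x) (f := fun z : E3 ↦
    sphericalWave (kappaS mu om) 0 ‖z‖ - sphericalWave (kappaP lam mu om) 0 ‖z‖) y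
  have hsnd := fderiv_comp_sub (𝕜 := ℝ) (x := x) (f := fun z : E3 ↦ fderiv ℝ (fun z : E3 ↦
    sphericalWave (kappaS mu om) 0 ‖z‖ - sphericalWave (kappaP lam mu om) 0 ‖z‖) z
      (EuclideanSpace.single j 1)) y
  simp only [_root_.Gamma, kupradzeKernel, Phi_eq_sphericalWave, coe_inner_single_single, hκ,
    hfst, hsnd]
  field_simp

lemma fderiv_Gamma_apply (lam : ℝ) {mu om : ℝ} (hmu : 0 < mu) (hom : om ≠ 0) (x y : E3)
    (i j : Fin 3) (t : E3) :
    fderiv ℝ (fun y : E3 ↦ _root_.Gamma lam mu om x y i j) y t = -(1 / (om : ℂ) ^ 2 *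
      fderiv ℝ (kupradzeKernel (kappaS mu om) (kappaP lam mu om) (EuclideanSpace.single i 1)
        (EuclideanSpace.single j 1)) (x - y) t) := by
  have hΓ : (fun y ↦ _root_.Gamma lam mu om x y i j)
      = fun y ↦ ((1 / (om : ℂ) ^ 2) • kupradzeKernel (kappaS mu om) (kappaP lam mu om)
          (EuclideanSpace.single i 1) (EuclideanSpace.single j 1)) (x - y) :=
    funext fun y ↦ Gamma_eq_kupradzeKernel lam hmu hom x y i j
  rw [hΓ, fderiv_comp_const_sub, fderiv_const_smul_field]
  rfl

lemma gradGammaSeries_eq_kupradzeGradTerm (lam mu om : ℝ) (x y : E3) (i j k : Fin 3) (l : ℕ) :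
    gradGammaSeries lam mu om x y i j k l = 1 / (om : ℂ) ^ 2 *
      kupradzeGradTerm (kappaS mu om) (kappaP lam mu om) (EuclideanSpace.single i 1)
        (EuclideanSpace.single j 1) (EuclideanSpace.single k 1) (x - y) l := by
  simp only [gradGammaSeries, kupradzeGradTerm, coe_inner_single_single]
  simp only [EuclideanSpace.inner_single_left, PiLp.sub_apply, map_one, one_mul]
  push_cast
  ring

end Elastic

/-- Series representation (gradkupradzeten1) of the gradient of the Kupradze
matrix in the second variable: the series converges absolutely and
`∂/∂y_k Γ^ω(x,y)_{ij} = − Σ_l gradGammaSeries`. -/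
theorem grad_gamma_series_representation (lam mu om : ℝ) (hmu : 0 < mu)
    (hlm : 0 < 3 * lam + 2 * mu) (hom : 0 < om)
    (x y : E3) (hxy : x ≠ y) (i j k : Fin 3) :
    Summable (fun l : ℕ => ‖gradGammaSeries lam mu om x y i j k l‖) ∧
    fderiv ℝ (fun y' : E3 => Gamma lam mu om x y' i j) y (EuclideanSpace.single k 1)
      = - ∑' l : ℕ, gradGammaSeries lam mu om x y i j k l := by
  have hsum := (grad_gamma_series_representation_general (kappaS mu om) (kappaP lam mu om)
    (EuclideanSpace.single i 1) (EuclideanSpace.single j 1) (EuclideanSpace.single k 1)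
    (sub_ne_zero.2 hxy)).mul_left (1 / (om : ℂ) ^ 2)
  simp only [← gradGammaSeries_eq_kupradzeGradTerm] at hsum
  rw [fderiv_Gamma_apply lam hmu hom.ne', hsum.tsum_eq]
  exact ⟨hsum.summable.norm, rfl⟩

end
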